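/- Let r ≥ 1 and m = 2r + 1. Let U₁ = diag(I_{2r−2}, X₁) and U₂ = diag(I_{2r−2}, X₂) in GL(2r+1, ℂ), where X₁ = [[1,−1,1],[0,1,0],[0,2,−1]] and X₂ = [[1,1,−2],[0,1,0],[0,1,−1]] are 3×3 matrices. Then there is no M ∈ GL(2r+1, ℂ) such that M commutes with A_i and B_i for all 1 ≤ i ≤ r, M commutes with C_j for all 1 ≤ j ≤ r − 1, and M U₂ M⁻¹ = U₁. -/

import Mathlib

/-- `Amat m i = diag(I_{2i-2}, V, I_{m-2i})` where `V = [[1,1],[0,1]]`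
(indices `1 ≤ i`, `2i ≤ m`; the `V`-block occupies rows/columns `2i-2, 2i-1` in
0-based indexing). -/
def Amat (m i : ℕ) : Matrix (Fin m) (Fin m) ℂ :=
  Matrix.of fun p q =>
    if p = q then 1 else if (p : ℕ) = 2 * i - 2 ∧ (q : ℕ) = 2 * i - 1 then 1 else 0

/-- `Bmat m i = diag(I_{2i-2}, V̂, I_{m-2i})` where `V̂ = [[1,0],[-1,1]]`. -/
def Bmat (m i : ℕ) : Matrix (Fin m) (Fin m) ℂ :=
  Matrix.of fun p q =>
    if p = q then 1 else if (p : ℕ) = 2 * i - 1 ∧ (q : ℕ) = 2 * i - 2 then -1 else 0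

/-- `Cmat m j = diag(I_{2j-2}, W, I_{m-2-2j})` where
`W = [[1,1,0,-1],[0,1,0,0],[0,-1,1,1],[0,0,0,1]]` (the `W`-block occupies
rows/columns `2j-2, …, 2j+1` in 0-based indexing). -/
def Cmat (m j : ℕ) : Matrix (Fin m) (Fin m) ℂ :=
  Matrix.of fun p q =>
    if p = q then 1 else
    if (p : ℕ) = 2 * j - 2 ∧ (q : ℕ) = 2 * j - 1 then 1 else
    if (p : ℕ) = 2 * j - 2 ∧ (q : ℕ) = 2 * j + 1 then -1 else
    if (p : ℕ) = 2 * j ∧ (q : ℕ) = 2 * j - 1 then -1 else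
    if (p : ℕ) = 2 * j ∧ (q : ℕ) = 2 * j + 1 then 1 else 0


/-- `U₁ = diag(I_{2r-2}, X₁)` with `X₁ = [[1,-1,1],[0,1,0],[0,2,-1]]`,
as a `(2r+1) × (2r+1)` complex matrix. -/
def U1mat (r : ℕ) : Matrix (Fin (2 * r + 1)) (Fin (2 * r + 1)) ℂ :=
  Matrix.of fun p q =>
    if (p : ℕ) = 2 * r - 2 ∧ (q : ℕ) = 2 * r - 1 then -1 else
    if (p : ℕ) = 2 * r - 2 ∧ (q : ℕ) = 2 * r then 1 else
    if (p : ℕ) = 2 * r ∧ (q : ℕ) = 2 * r - 1 then 2 else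
    if (p : ℕ) = 2 * r ∧ (q : ℕ) = 2 * r then -1 else
    if p = q then 1 else 0

/-- `U₂ = diag(I_{2r-2}, X₂)` with `X₂ = [[1,1,-2],[0,1,0],[0,1,-1]]`,
as a `(2r+1) × (2r+1)` complex matrix. -/
def U2mat (r : ℕ) : Matrix (Fin (2 * r + 1)) (Fin (2 * r + 1)) ℂ :=
  Matrix.of fun p q =>
    if (p : ℕ) = 2 * r - 2 ∧ (q : ℕ) = 2 * r - 1 then 1 else
    if (p : ℕ) = 2 * r - 2 ∧ (q : ℕ) = 2 * r then -2 else
    if (p : ℕ) = 2 * r ∧ (q : ℕ) = 2 * r - 1 then 1 else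
    if (p : ℕ) = 2 * r ∧ (q : ℕ) = 2 * r then -1 else
    if p = q then 1 else 0

/-- There is no invertible `M` commuting with all `A_i, B_i` (`1 ≤ i ≤ r`) and
`C_j` (`1 ≤ j ≤ r-1`) with `M U₂ M⁻¹ = U₁`. -/
theorem stmt_11 (r : ℕ) (hr : 1 ≤ r) :
    ¬ ∃ M : Matrix (Fin (2 * r + 1)) (Fin (2 * r + 1)) ℂ, IsUnit M ∧
      (∀ i, 1 ≤ i → i ≤ r →
        M * Amat (2 * r + 1) i = Amat (2 * r + 1) i * M ∧
        M * Bmat (2 * r + 1) i = Bmat (2 * r + 1) i * M) ∧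
      (∀ j, 1 ≤ j → j ≤ r - 1 →
        M * Cmat (2 * r + 1) j = Cmat (2 * r + 1) j * M) ∧
      M * U2mat r * M⁻¹ = U1mat r := by
  rintro ⟨M, hM, hAB, -, hU⟩
  obtain ⟨hA, hB⟩ := hAB r hr le_rfl
  obtain ⟨a, ha⟩ : ∃ a : Fin (2 * r + 1), (a : ℕ) = 2 * r - 2 := ⟨⟨2 * r - 2, by omega⟩, rfl⟩
  obtain ⟨b, hb⟩ : ∃ b : Fin (2 * r + 1), (b : ℕ) = 2 * r - 1 := ⟨⟨2 * r - 1, by omega⟩, rfl⟩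
  have hab : a ≠ b := by
    intro h
    have := congrArg Fin.val h
    omega
  have eA : Amat (2 * r + 1) r = 1 + Matrix.single a b 1 := by
    ext p q
    simp only [Amat, Matrix.of_apply, Matrix.add_apply, Matrix.one_apply, Matrix.single_apply,
      Fin.ext_iff, ha, hb]
    split_ifs <;> first | omega | simp
  have eB : Bmat (2 * r + 1) r = 1 - Matrix.single b a 1 := by
    ext p q
    simp only [Bmat, Matrix.of_apply, Matrix.sub_apply, Matrix.one_apply, Matrix.single_apply,
      Fin.ext_iff, ha, hb]
    split_ifs <;> first | omega | simp
  have cA : Commute (Matrix.single a b (1 : ℂ)) M := by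
    rw [eA, mul_add, add_mul, mul_one, one_mul] at hA
    exact (add_left_cancel hA).symm
  have cB : Commute (Matrix.single b a (1 : ℂ)) M := by
    rw [eB, mul_sub, sub_mul, mul_one, one_mul] at hB
    exact (sub_right_injective hB).symm
  have hd : M a a = M b b := Matrix.diag_eq_of_commute_single cA
  have colA : ∀ p, p ≠ a → M p a = 0 := fun p hp => Matrix.col_eq_zero_of_commute_single cA hp
  have colB : ∀ p, p ≠ b → M p b = 0 := fun p hp => Matrix.col_eq_zero_of_commute_single cB hp
  have rowA : ∀ q, q ≠ a → M a q = 0 := fun q hq =>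
    Matrix.row_eq_zero_of_commute_single cB hq
  have hdet : IsUnit M.det := (Matrix.isUnit_iff_isUnit_det M).1 hM
  have hMU : M * U2mat r = U1mat r * M := by
    rw [← hU, Matrix.mul_assoc _ M⁻¹ M, Matrix.nonsing_inv_mul M hdet, Matrix.mul_one]
  have h := congrFun (congrFun hMU a) b
  rw [Matrix.mul_apply, Matrix.mul_apply,
    Finset.sum_eq_single a (fun k _ hk => by rw [rowA k hk, zero_mul]) (by simp),
    Finset.sum_eq_single b (fun k _ hk => by rw [colB k hk, mul_zero]) (by simp)] at h
  have h2 : U2mat r a b = 1 := by simp [U2mat, ha, hb]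
  have h1 : U1mat r a b = -1 := by simp [U1mat, ha, hb]
  rw [h2, h1, ← hd] at h
  have h0 : M a a = 0 := by linear_combination h / 2
  refine hdet.ne_zero (Matrix.det_eq_zero_of_column_eq_zero a fun p => ?_)
  by_cases hp : p = a
  · rw [hp, h0]
  · exact colA p hp
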